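/- Let F be a field of characteristic p (possibly 0) with algebraic closure F̄, let d ≥ 1, and let f ∈ F[t][x₁,…,x_d] be square-free as an element of F̄[t][x₁,…,x_d]. Let a₁, b₁, c₁, …, a_d, b_d, c_d ∈ F[t] with gcd(a_i, b_i) = 1 for each i, and let Ψ : F[t][x₁,…,x_d] → F[t][x₁,…,x_{2d}] be the F[t]-algebra homomorphism with Ψ(x_i) = a_i·x_i + b_i·x_{d+i} + c_i for i = 1,…,d. If at least one of the following holds, then Ψ(f) is separable in t: (1) p = 0 or p > M·deg_{x⃗} f + deg_t f, where M is the maximum of the degrees of all a_i, b_i, c_i and deg_{x⃗} f is the total degree of f in (x₁,…,x_d); (2) for every i = 1,…,d, a_i ≠ 0 and b_i/a_i ∉ F(t^p). -/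

import Mathlib

/-- `f ∈ F[t][x_i : i ∈ σ]` is separable in `t`: viewed as a univariate polynomial in `t`
with coefficients in the rational function field `F(x_i : i ∈ σ)`, it is separable. -/
noncomputable def sepInT {F : Type*} [Field F] {σ : Type*}
    (f : MvPolynomial σ (Polynomial F)) : Prop :=
  Polynomial.Separable
    (MvPolynomial.eval₂
      (Polynomial.mapRingHom
        ((algebraMap (MvPolynomial σ F) (FractionRing (MvPolynomial σ F))).comp MvPolynomial.C))
      (fun i => Polynomial.C
        (algebraMap (MvPolynomial σ F) (FractionRing (MvPolynomial σ F)) (MvPolynomial.X i)))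
      f)

/-- The degree in `t` of `f ∈ F[t][x₁,…,x_d]`. -/
noncomputable def degT {F : Type*} [CommRing F] {σ : Type*}
    (f : MvPolynomial σ (Polynomial F)) : ℕ :=
  f.support.sup fun m => (f.coeff m).natDegree

/-- The condition that the rational function `b/a ∈ F(t)` does not lie in the subfield
`F(t^p)` generated over (the image of) `F` by `t^p`, where `p = ringChar F`. -/
def notInFtp (F : Type*) [Field F] (a b : Polynomial F) : Prop :=
  (algebraMap (Polynomial F) (RatFunc F)) b / (algebraMap (Polynomial F) (RatFunc F)) a ∉
    Subfield.closure (Set.range (RatFunc.C (K := F)) ∪ {RatFunc.X ^ ringChar F})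

/-!
Since `lᵢ aᵢ + mᵢ bᵢ = 1` for suitable `lᵢ, mᵢ`, the substitution `Ψ` extends to an isomorphism
`F[t][x][v] ≃ F[t][x, y]` with `vᵢ ↦ lᵢ yᵢ - mᵢ xᵢ`; hence `Ψ f` is square-free and each of its
divisors is `Ψ h` for some `h ∣ f`. By Gauss's lemma, if `Ψ f` is not separable in `t`, then such a
divisor `Ψ h` has positive degree in `t` and `∂ₜ (Ψ h) = 0`. Then `p` divides the `t`-degree of
`Ψ h`, which is impossible when `p` is zero or large. In general, the chain rule shows that the
`vᵢ`-coefficient of `∂ₜ (Ψ h)` is the Wronskian of `aᵢ` and `bᵢ` times `∂h/∂xᵢ`. If no Wronskian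
vanishes, all derivatives of `h` do, so `h` is a `p`-th power over a perfect field, against the
square-freeness of `f`.
-/

section

open MvPolynomial
open scoped Polynomial

theorem squarefree_of_squarefree_map {M N G : Type*} [Monoid M] [Monoid N] [FunLike G M N]
    [MonoidHomClass G M N] (φ : G) [IsLocalHom φ] {x : M} (hx : Squarefree (φ x)) :
    Squarefree x :=
  fun s hs => isUnit_of_map_unit φ s (hx (φ s) (map_mul φ s s ▸ map_dvd φ hs))

section Separability

variable {A L : Type*} [CommRing A] [IsDomain A] [UniqueFactorizationMonoid A]
  [Field L] [Algebra A L] [IsFractionRing A L]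

theorem exists_irreducible_dvd_of_irreducible_dvd_map {g : A[X]} (hg : g ≠ 0) {Q : L[X]}
    (hQ : Irreducible Q) (hQg : Q ∣ g.map (algebraMap A L)) :
    ∃ q : A[X], Irreducible q ∧ q.natDegree ≠ 0 ∧ q ∣ g ∧
      Associated Q (q.map (algebraMap A L)) := by
  have hinj : Function.Injective (algebraMap A L) := IsFractionRing.injective A L
  obtain ⟨s, hs, hsg⟩ := UniqueFactorizationMonoid.exists_prime_factors g hg
  have hQs : Q ∣ (s.map (Polynomial.map (algebraMap A L))).prod := by
    rw [← Polynomial.map_multiset_prod]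
    exact hQg.trans (Polynomial.map_dvd _ hsg.symm.dvd)
  obtain ⟨q, hqs, hQq⟩ := hQ.prime.exists_mem_multiset_map_dvd hQs
  have hq : Irreducible q := (hs q hqs).irreducible
  have hdeg : q.natDegree ≠ 0 := by
    rw [← Polynomial.natDegree_map_eq_of_injective hinj q]
    exact (hQ.natDegree_pos.trans_le <| Polynomial.natDegree_le_of_dvd hQq <|
      (Polynomial.map_ne_zero_iff hinj).2 hq.ne_zero).ne'
  have hqL : Irreducible (q.map (algebraMap A L)) :=
    (hq.isPrimitive hdeg).irreducible_iff_irreducible_map_fraction_map.1 hq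
  exact ⟨q, hq, hdeg, (Multiset.dvd_prod hqs).trans hsg.dvd, hQ.associated_of_dvd hqL hQq⟩

theorem separable_map_of_squarefree {g : A[X]} (hg : Squarefree g)
    (hder : ∀ q, Irreducible q → q ∣ g → q.natDegree ≠ 0 → Polynomial.derivative q ≠ 0) :
    (g.map (algebraMap A L)).Separable := by
  have hinj : Function.Injective (algebraMap A L) := IsFractionRing.injective A L
  refine isCoprime_of_irreducible_dvd
    (fun h => (Polynomial.map_ne_zero_iff hinj).2 hg.ne_zero h.1) fun Q hQ hQg hQg' => ?_
  obtain ⟨q, hq, hdeg, ⟨k, rfl⟩, hassoc⟩ :=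
    exists_irreducible_dvd_of_irreducible_dvd_map hg.ne_zero hQ hQg
  have hdvd : q ∣ Polynomial.derivative (q * k) := by
    apply (hq.isPrimitive hdeg).dvd_of_fraction_map_dvd_fraction_map (K := L)
    rw [← Polynomial.derivative_map]
    exact hassoc.symm.dvd.trans hQg'
  rw [Polynomial.derivative_mul, dvd_add_left (dvd_mul_right q _)] at hdvd
  rcases hq.prime.dvd_or_dvd hdvd with h | h
  · exact hder q hq (dvd_mul_right q k) hdeg (Polynomial.dvd_derivative_iff.1 h)
  · exact hq.not_isUnit (hg q (mul_dvd_mul_left q h))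

end Separability

section Swap

variable {R σ : Type*} [CommSemiring R]

variable (R σ) in
/-- The isomorphism `R[t][xᵢ : i ∈ σ] ≃ R[xᵢ : i ∈ σ][t]`, which turns a polynomial in the `xᵢ` into
a univariate polynomial in `t`. Both sides are identified with the polynomial ring on `Option σ`,
where `none` is `t`. -/
noncomputable def swapEquiv : MvPolynomial σ R[X] ≃ₐ[R] (MvPolynomial σ R)[X] :=
  (optionEquivRight R σ).symm.trans (optionEquivLeft R σ)

@[simp]
theorem swapEquiv_C (r : R[X]) : swapEquiv R σ (C r) = r.map C := by
  induction r using Polynomial.induction_on' with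
  | add p q hp hq => simp only [map_add, Polynomial.map_add, hp, hq]
  | monomial n r =>
    simp [swapEquiv, ← Polynomial.C_mul_X_pow_eq_monomial]

@[simp]
theorem swapEquiv_X (i : σ) : swapEquiv R σ (X i) = Polynomial.C (X i) := by
  simp [swapEquiv]

theorem natDegree_swapEquiv_aeval_le {R τ : Type*} [CommRing R] {u : σ → MvPolynomial τ R[X]}
    {M : ℕ} (hu : ∀ i, (swapEquiv R τ (u i)).natDegree ≤ M) (f : MvPolynomial σ R[X]) :
    (swapEquiv R τ (aeval u f)).natDegree ≤ M * f.totalDegree + degT f := by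
  rw [aeval_def, eval₂_eq, map_sum]
  refine Polynomial.natDegree_sum_le_of_forall_le _ _ fun m hm => ?_
  rw [map_mul, map_prod, algebraMap_eq, swapEquiv_C, add_comm]
  refine Polynomial.natDegree_mul_le_of_le
    (Polynomial.natDegree_map_le.trans
      (Finset.le_sup (f := fun m => (f.coeff m).natDegree) hm)) ?_
  calc (∏ i ∈ m.support, swapEquiv R τ (u i ^ m i)).natDegree
      ≤ ∑ i ∈ m.support, (swapEquiv R τ (u i ^ m i)).natDegree := Polynomial.natDegree_prod_le _ _
    _ ≤ ∑ i ∈ m.support, m i * M := Finset.sum_le_sum fun i _ => by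
        rw [map_pow]
        exact Polynomial.natDegree_pow_le_of_le _ (hu i)
    _ = M * m.sum fun _ n => n := by rw [← Finset.sum_mul, mul_comm, Finsupp.sum]
    _ ≤ M * f.totalDegree := Nat.mul_le_mul_left _ (le_totalDegree hm)

theorem sepInT_iff_separable_swapEquiv {F : Type*} [Field F] (f : MvPolynomial σ F[X]) :
    sepInT f ↔ ((swapEquiv F σ f).map
      (algebraMap (MvPolynomial σ F) (FractionRing (MvPolynomial σ F)))).Separable := by
  rw [sepInT]
  congr! 1
  induction f using MvPolynomial.induction_on with
  | C r => simp [Polynomial.map_map]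
  | add p q hp hq => simp only [eval₂_add, map_add, Polynomial.map_add, hp, hq]
  | mul_X p i hp => simp [hp]

end Swap

section CoeffDerivation

variable {R A σ τ : Type*} [CommRing R] [CommRing A] [Algebra R A]

variable (σ) in
/-- The derivation of `A[xᵢ : i ∈ σ]` that applies the derivation `δ` of `A` to each coefficient.
For `A = R[t]` and `δ = d/dt` it is the partial derivative with respect to `t`. -/
noncomputable def coeffDerivation (δ : Derivation R A A) :
    Derivation R (MvPolynomial σ A) (MvPolynomial σ A) :=
  .mk' ((AddMonoidAlgebra.coeffLinearEquiv R).symm.toLinearMap ∘ₗ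
      Finsupp.mapRange.linearMap δ.toLinearMap ∘ₗ
        (AddMonoidAlgebra.coeffLinearEquiv R).toLinearMap) <| by
    classical
    intro p q
    ext m
    change δ (coeff m (p * q)) = _
    simp only [smul_eq_mul, coeff_add, mul_comm q, coeff_mul, map_sum, Derivation.leibniz,
      Finset.sum_add_distrib]
    congr 1
    exact Finset.sum_congr rfl fun _ _ => mul_comm _ _

@[simp]
theorem coeff_coeffDerivation (δ : Derivation R A A) (m : σ →₀ ℕ) (h : MvPolynomial σ A) :
    coeff m (coeffDerivation σ δ h) = δ (coeff m h) :=
  rfl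

@[simp]
theorem coeffDerivation_C (δ : Derivation R A A) (a : A) :
    coeffDerivation σ δ (C a) = C (δ a) := by
  classical
  ext m
  simp only [coeff_coeffDerivation, coeff_C]
  split_ifs <;> simp

@[simp]
theorem coeffDerivation_X (δ : Derivation R A A) (i : σ) : coeffDerivation σ δ (X i) = 0 := by
  classical
  ext m
  simp only [coeff_coeffDerivation, coeff_X, coeff_zero]
  split_ifs <;> simp

theorem coeffDerivation_algHom [Fintype σ] (δ : Derivation R A A)
    (φ : MvPolynomial σ A →ₐ[A] MvPolynomial τ A) (h : MvPolynomial σ A) :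
    coeffDerivation τ δ (φ h) =
      φ (coeffDerivation σ δ h) + ∑ i, φ (pderiv i h) * coeffDerivation τ δ (φ (X i)) := by
  classical
  induction h using MvPolynomial.induction_on with
  | C a => simp [algHom_C, algebraMap_eq]
  | add p q hp hq =>
    simp only [map_add, hp, hq, add_mul, Finset.sum_add_distrib]
    ring
  | mul_X p j hp =>
    simp only [map_mul, map_add, Derivation.leibniz, coeffDerivation_X, pderiv_X, hp,
      smul_eq_mul, mul_zero, zero_add, add_mul, mul_add, Finset.sum_add_distrib]
    simp only [Pi.single_apply, MonoidWithZeroHom.map_ite_one_zero, ite_mul, one_mul, zero_mul,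
      Finset.sum_ite_eq, Finset.mem_univ, if_true, Finset.mul_sum, mul_assoc, mul_comm]
    ring

theorem swapEquiv_coeffDerivation (h : MvPolynomial σ R[X]) :
    swapEquiv R σ (coeffDerivation σ Polynomial.derivative' h) =
      Polynomial.derivative (swapEquiv R σ h) := by
  induction h using MvPolynomial.induction_on with
  | C r => simp [Polynomial.derivative_map]
  | add p q hp hq => simp only [map_add, hp, hq]
  | mul_X p i hp => simp [hp, mul_comm]

end CoeffDerivation

theorem eq_zero_of_C_add_sum_C_mul_X_eq_zero {R σ : Type*} [CommSemiring R] [Fintype σ] {r : R}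
    {s : σ → R} (h : C r + ∑ i, C (s i) * X i = (0 : MvPolynomial σ R)) :
    r = 0 ∧ ∀ i, s i = 0 := by
  classical
  have hr : r = 0 := by simpa using congrArg constantCoeff h
  refine ⟨hr, fun j => ?_⟩
  simpa [hr, coeff_sum, coeff_X, Finsupp.single_left_inj] using congrArg (coeff (.single j 1)) h

section LinearSubst

variable {A σ : Type*} [CommRing A]

/-- The `A`-algebra homomorphism `xᵢ ↦ aᵢ xᵢ + bᵢ yᵢ + cᵢ`, where `X (.inl i)` is `xᵢ` and
`X (.inr i)` is `yᵢ` in the target. For `A = F[t]` this is the substitution `Ψ`. -/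
noncomputable def linearSubst (a b c : σ → A) : MvPolynomial σ A →ₐ[A] MvPolynomial (σ ⊕ σ) A :=
  aeval fun i => C (a i) * X (.inl i) + C (b i) * X (.inr i) + C (c i)

@[simp]
theorem linearSubst_X (a b c : σ → A) (i : σ) :
    linearSubst a b c (X i) = C (a i) * X (.inl i) + C (b i) * X (.inr i) + C (c i) :=
  aeval_X _ i

/-- When `lᵢ aᵢ + mᵢ bᵢ = 1`, the isomorphism `A[x][v] ≃ A[x, y]` which extends `linearSubst a b c`
on `A[x]` by `vᵢ ↦ lᵢ yᵢ - mᵢ xᵢ`, so that each `(xᵢ, vᵢ)` undergoes an affine change of variables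
of determinant `1`. -/
noncomputable def linearSubstEquiv (a b c : σ → A) {l m : σ → A}
    (hlm : ∀ i, l i * a i + m i * b i = 1) :
    MvPolynomial σ (MvPolynomial σ A) ≃ₐ[A] MvPolynomial (σ ⊕ σ) A :=
  .ofAlgHom
    (aevalTower (linearSubst a b c) fun i => C (l i) * X (.inr i) - C (m i) * X (.inl i))
    (aeval (Sum.elim
      (fun i => C (C (l i) * (X i - C (c i))) - C (C (b i)) * X i)
      (fun i => C (C (m i) * (X i - C (c i))) + C (C (a i)) * X i)))
    (by
      apply MvPolynomial.algHom_ext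
      rintro (i | i)
      all_goals
        have h : C (l i) * C (a i) + C (m i) * C (b i) = (1 : MvPolynomial (σ ⊕ σ) A) := by
          simp only [← map_mul, ← map_add, hlm, map_one]
        simp only [AlgHom.coe_comp, AlgHom.coe_id, id_eq, Function.comp_apply, aeval_X,
          Sum.elim_inl, Sum.elim_inr, map_add, map_sub, map_mul, aevalTower_C, aevalTower_X,
          linearSubst_X, algHom_C, algebraMap_eq]
      · linear_combination X (Sum.inl i) * h
      · linear_combination X (Sum.inr i) * h)
    (by
      have h (i : σ) : C (C (l i)) * C (C (a i)) + C (C (m i)) * C (C (b i)) =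
          (1 : MvPolynomial σ (MvPolynomial σ A)) := by
        simp only [← map_mul, ← map_add, hlm, map_one]
      apply MvPolynomial.algHom_ext'
      · ext1 i
        simp only [AlgHom.coe_comp, AlgHom.id_comp, IsScalarTower.coe_toAlgHom',
          Function.comp_apply, algebraMap_eq, aevalTower_C, linearSubst_X, map_add, map_sub,
          map_mul, algHom_C, MvPolynomial.algebraMap_apply, aeval_X, Sum.elim_inl, Sum.elim_inr]
        linear_combination (C (X i) - C (C (c i))) * h i
      · intro i
        simp only [AlgHom.coe_comp, AlgHom.coe_id, id_eq, Function.comp_apply, aevalTower_X,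
          map_sub, map_mul, algHom_C, MvPolynomial.algebraMap_apply, algebraMap_eq, aeval_X,
          Sum.elim_inl, Sum.elim_inr]
        linear_combination X i * h i)

variable (a b c : σ → A) {l m : σ → A} (hlm : ∀ i, l i * a i + m i * b i = 1)

@[simp]
theorem linearSubstEquiv_C (h : MvPolynomial σ A) :
    linearSubstEquiv a b c hlm (C h) = linearSubst a b c h := by
  simp [linearSubstEquiv]

@[simp]
theorem linearSubstEquiv_X (i : σ) :
    linearSubstEquiv a b c hlm (X i) = C (l i) * X (.inr i) - C (m i) * X (.inl i) := by
  simp [linearSubstEquiv]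

theorem exists_dvd_of_dvd_linearSubst [IsDomain A] (hab : ∀ i, IsCoprime (a i) (b i))
    {f : MvPolynomial σ A} (hf : f ≠ 0) {q : MvPolynomial (σ ⊕ σ) A}
    (hq : q ∣ linearSubst a b c f) : ∃ h, h ∣ f ∧ q = linearSubst a b c h := by
  choose l m hlm using hab
  let e := linearSubstEquiv a b c hlm
  have hdvd : e.symm q ∣ C f := by
    rw [← e.symm_apply_apply (C f), linearSubstEquiv_C]
    exact map_dvd e.symm hq
  obtain ⟨h, hhf, hqh⟩ := (dvd_C_iff_exists hf).1 hdvd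
  exact ⟨h, hhf, by rw [← linearSubstEquiv_C a b c hlm, ← hqh, e.apply_symm_apply]⟩

theorem linearSubst_injective (hab : ∀ i, IsCoprime (a i) (b i)) :
    Function.Injective (linearSubst a b c) := by
  choose l m hlm using hab
  intro f g hfg
  simp only [← linearSubstEquiv_C a b c hlm] at hfg
  exact C_injective _ _ ((linearSubstEquiv a b c hlm).injective hfg)

theorem squarefree_linearSubst [IsDomain A] (hab : ∀ i, IsCoprime (a i) (b i))
    {f : MvPolynomial σ A} (hf : Squarefree f) : Squarefree (linearSubst a b c f) := by
  intro q hq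
  obtain ⟨h, -, rfl⟩ :=
    exists_dvd_of_dvd_linearSubst a b c hab hf.ne_zero ((dvd_mul_right q q).trans hq)
  rw [← map_mul] at hq
  obtain ⟨k, hkf, hk⟩ := exists_dvd_of_dvd_linearSubst a b c hab hf.ne_zero hq
  rw [← linearSubst_injective a b c hab hk] at hkf
  exact (hf h hkf).map (linearSubst a b c)

section Derivation

variable {R : Type*} [CommRing R] [Algebra R A] (δ : Derivation R A A)

theorem coeffDerivation_linearSubst_X (i : σ) :
    coeffDerivation (σ ⊕ σ) δ (linearSubst a b c (X i)) =
      linearSubstEquiv a b c hlm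
        (C (C (δ (a i) * l i + δ (b i) * m i) * (X i - C (c i)) + C (δ (c i))) +
          C (C (a i * δ (b i) - δ (a i) * b i)) * X i) := by
  have h : C (l i) * C (a i) + C (m i) * C (b i) = (1 : MvPolynomial (σ ⊕ σ) A) := by
    simp only [← map_mul, ← map_add, hlm, map_one]
  simp only [linearSubst_X, linearSubstEquiv_C, linearSubstEquiv_X, map_add, map_sub, map_mul,
    algHom_C, algebraMap_eq, Derivation.leibniz, coeffDerivation_C, coeffDerivation_X, smul_eq_mul,
    mul_zero, zero_add]
  linear_combination
    (-C (δ (a i)) * X (Sum.inl i) - C (δ (b i)) * X (Sum.inr i)) * h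

theorem coeffDerivation_linearSubst [Fintype σ] (h : MvPolynomial σ A) :
    coeffDerivation (σ ⊕ σ) δ (linearSubst a b c h) =
      linearSubstEquiv a b c hlm
        (C (coeffDerivation σ δ h + ∑ i, pderiv i h *
            (C (δ (a i) * l i + δ (b i) * m i) * (X i - C (c i)) + C (δ (c i)))) +
          ∑ i, C (pderiv i h * C (a i * δ (b i) - δ (a i) * b i)) * X i) := by
  rw [coeffDerivation_algHom, map_add, linearSubstEquiv_C, map_add, map_sum, map_sum, add_assoc,
    ← Finset.sum_add_distrib]
  congr 1
  refine Finset.sum_congr rfl fun i _ => ?_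
  rw [coeffDerivation_linearSubst_X a b c hlm]
  simp only [map_add, map_mul, linearSubstEquiv_C, mul_add, mul_assoc]

theorem derivs_eq_zero_of_coeffDerivation_linearSubst_eq_zero [IsDomain A] [Finite σ]
    (hab : ∀ i, IsCoprime (a i) (b i)) (hδ : ∀ i, a i * δ (b i) - δ (a i) * b i ≠ 0)
    {h : MvPolynomial σ A} (hh : coeffDerivation (σ ⊕ σ) δ (linearSubst a b c h) = 0) :
    coeffDerivation σ δ h = 0 ∧ ∀ i, pderiv i h = 0 := by
  have := Fintype.ofFinite σ
  choose l m hlm using hab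
  rw [coeffDerivation_linearSubst a b c hlm, EmbeddingLike.map_eq_zero_iff] at hh
  obtain ⟨hsum, hmul⟩ := eq_zero_of_C_add_sum_C_mul_X_eq_zero hh
  have hpderiv i : pderiv i h = 0 :=
    (mul_eq_zero.1 (hmul i)).resolve_right (C_ne_zero.2 (hδ i))
  exact ⟨by simpa [hpderiv] using hsum, hpderiv⟩

end Derivation

end LinearSubst

section PthPower

theorem dvd_of_mem_support_of_pderiv_eq_zero {R σ : Type*} [CommSemiring R] [NoZeroDivisors R]
    (p : ℕ) [CharP R p] {i : σ} {h : MvPolynomial σ R} (hi : pderiv i h = 0) {m : σ →₀ ℕ}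
    (hm : m ∈ h.support) : p ∣ m i := by
  classical
  rcases eq_or_ne (m i) 0 with hmi | hmi
  · simp [hmi]
  have hcoeff : coeff m h * (m i : R) = 0 := by
    have := coeff_pderiv (i := i) h (m - .single i 1)
    rw [hi, coeff_zero, tsub_add_cancel_of_le
      (Finsupp.single_le_iff.2 (Nat.one_le_iff_ne_zero.2 hmi))] at this
    rw [this, ← Nat.cast_succ]
    simp [Nat.sub_add_cancel (Nat.one_le_iff_ne_zero.2 hmi)]
  exact (CharP.cast_eq_zero_iff R p _).1
    ((mul_eq_zero.1 hcoeff).resolve_left (mem_support_iff.1 hm))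

theorem exists_pow_eq_of_pderiv_eq_zero {R σ : Type*} [CommRing R] [NoZeroDivisors R] (p : ℕ)
    [Fact p.Prime] [CharP R p] {h : MvPolynomial σ R} (hx : ∀ i, pderiv i h = 0)
    (hcoeff : ∀ m, ∃ r, r ^ p = coeff m h) : ∃ s, s ^ p = h := by
  choose r hr using hcoeff
  suffices h ∈ (frobenius (MvPolynomial σ R) p).range from this
  rw [h.as_sum]
  refine sum_mem fun m hm => ⟨monomial (m.mapRange (· / p) (Nat.zero_div p)) (r m), ?_⟩
  rw [frobenius_def, monomial_pow, hr]
  have hpm : p • m.mapRange (· / p) (Nat.zero_div p) = m := by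
    ext i
    simp [Nat.mul_div_cancel' (dvd_of_mem_support_of_pderiv_eq_zero p (hx i) hm)]
  rw [hpm]

theorem exists_pow_eq_of_derivative_eq_zero {R : Type*} [CommSemiring R] [NoZeroDivisors R] (p : ℕ)
    [hp : Fact p.Prime] [CharP R p] [PerfectRing R p] {f : R[X]}
    (hf : Polynomial.derivative f = 0) : ∃ g, g ^ p = f :=
  ⟨_, by rw [← polynomial_expand_eq, Polynomial.expand_contract p hf hp.out.ne_zero]⟩

theorem dvd_natDegree_of_derivative_eq_zero {R : Type*} [Semiring R] [NoZeroDivisors R] (p : ℕ)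
    [CharP R p] {f : R[X]} (hf : Polynomial.derivative f = 0) : p ∣ f.natDegree := by
  rcases eq_or_ne f.natDegree 0 with hn | hn
  · simp [hn]
  have hcoeff : f.leadingCoeff * (f.natDegree : R) = 0 := by
    have := Polynomial.coeff_derivative f (f.natDegree - 1)
    rw [hf, Polynomial.coeff_zero, ← Nat.cast_succ, Nat.succ_eq_add_one,
      Nat.sub_add_cancel (Nat.one_le_iff_ne_zero.2 hn)] at this
    exact this.symm
  have hf0 : f.leadingCoeff ≠ 0 :=
    Polynomial.leadingCoeff_ne_zero.2 (Polynomial.ne_zero_of_natDegree_gt (Nat.pos_of_ne_zero hn))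
  exact (CharP.cast_eq_zero_iff R p _).1 ((mul_eq_zero.1 hcoeff).resolve_left hf0)

end PthPower

section BaseChange

theorem isLocalHom_mvPolynomial_map {R S σ : Type*} [CommRing R] [CommRing S] {φ : R →+* S}
    [IsLocalHom φ] (hφ : Function.Injective φ) :
    IsLocalHom (map φ : MvPolynomial σ R →+* MvPolynomial σ S) where
  map_nonunit h hh := by
    rw [isUnit_iff] at hh ⊢
    simpa only [coeff_map, isUnit_map_iff, IsNilpotent.map_iff hφ] using hh

variable {F K σ : Type*} [Field F] [Field K] [Algebra F K]

instance isLocalHom_map_mapRingHom :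
    IsLocalHom (map (Polynomial.mapRingHom (algebraMap F K)) :
      MvPolynomial σ F[X] →+* MvPolynomial σ K[X]) :=
  have : IsLocalHom (Polynomial.mapRingHom (algebraMap F K)) :=
    ⟨fun _ => (Polynomial.isUnit_map _).1⟩
  isLocalHom_mvPolynomial_map (Polynomial.map_injective _ (algebraMap F K).injective)

theorem isUnit_of_dvd_of_derivs_eq_zero [PerfectField K] (p : ℕ) [hp : Fact p.Prime] [CharP F p]
    {f : MvPolynomial σ F[X]} (hf : Squarefree (map (Polynomial.mapRingHom (algebraMap F K)) f))
    {h : MvPolynomial σ F[X]} (hhf : h ∣ f) (ht : coeffDerivation σ Polynomial.derivative' h = 0)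
    (hx : ∀ i, pderiv i h = 0) : IsUnit h := by
  have : CharP K p := charP_of_injective_algebraMap (algebraMap F K).injective p
  have : ExpChar K p := .prime hp.out
  have : PerfectRing K p := PerfectField.toPerfectRing p
  obtain ⟨s, hs⟩ : ∃ s, s ^ p = map (Polynomial.mapRingHom (algebraMap F K)) h := by
    refine exists_pow_eq_of_pderiv_eq_zero p (fun i => by rw [pderiv_map, hx, map_zero])
      fun m => exists_pow_eq_of_derivative_eq_zero p ?_
    have : Polynomial.derivative (coeff m h) = 0 := by
      simpa using congrArg (coeff m) ht
    rw [coeff_map, Polynomial.coe_mapRingHom, Polynomial.derivative_map, this, Polynomial.map_zero]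
  have hsunit : IsUnit s := by
    refine hf s ?_
    rw [← sq]
    exact (pow_dvd_pow s hp.out.two_le).trans (hs ▸ map_dvd _ hhf)
  exact isUnit_of_map_unit _ h (hs ▸ hsunit.pow p)

end BaseChange

section Wronskian

variable {F : Type*} [Field F]

theorem algebraMap_mem_closure_of_derivative_eq_zero (p : ℕ) [CharP F p] (hp : p ≠ 0) {q : F[X]}
    (hq : Polynomial.derivative q = 0) :
    algebraMap F[X] (RatFunc F) q ∈
      Subfield.closure (Set.range (RatFunc.C (K := F)) ∪ {RatFunc.X ^ p}) := by
  rw [← Polynomial.expand_contract p hq hp]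
  induction Polynomial.contract p q using Polynomial.induction_on' with
  | add r s hr hs => rw [map_add, map_add]; exact add_mem hr hs
  | monomial n z =>
    rw [Polynomial.expand_monomial, ← Polynomial.C_mul_X_pow_eq_monomial, map_mul, map_pow,
      RatFunc.algebraMap_C, RatFunc.algebraMap_X, mul_comm n, pow_mul]
    exact mul_mem (Subfield.subset_closure (.inl ⟨z, rfl⟩))
      (pow_mem (Subfield.subset_closure (.inr rfl)) n)

theorem wronskian_ne_zero_of_notInFtp (hp : ringChar F ≠ 0) {a b : F[X]} (hab : IsCoprime a b)
    (h : notInFtp F a b) : Polynomial.wronskian a b ≠ 0 := by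
  intro hW
  obtain ⟨ha, hb⟩ := hab.wronskian_eq_zero_iff.1 hW
  exact h (div_mem (algebraMap_mem_closure_of_derivative_eq_zero (ringChar F) hp hb)
    (algebraMap_mem_closure_of_derivative_eq_zero (ringChar F) hp ha))

end Wronskian

section SepInT

variable {F σ : Type*} [Field F] {a b c : σ → F[X]} {f : MvPolynomial σ F[X]}

theorem sepInT_linearSubst_of_derivative_ne_zero (hab : ∀ i, IsCoprime (a i) (b i))
    (hf : Squarefree f)
    (hder : ∀ h, h ∣ f → (swapEquiv F (σ ⊕ σ) (linearSubst a b c h)).natDegree ≠ 0 →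
      coeffDerivation (σ ⊕ σ) Polynomial.derivative' (linearSubst a b c h) ≠ 0) :
    sepInT (linearSubst a b c f) := by
  rw [sepInT_iff_separable_swapEquiv]
  apply separable_map_of_squarefree
  · apply squarefree_of_squarefree_map (swapEquiv F (σ ⊕ σ)).symm
    rw [AlgEquiv.symm_apply_apply]
    exact squarefree_linearSubst a b c hab hf
  · intro q _ hqf hdeg
    obtain ⟨h, hhf, hqh⟩ : ∃ h, h ∣ f ∧ (swapEquiv F (σ ⊕ σ)).symm q = linearSubst a b c h := by
      refine exists_dvd_of_dvd_linearSubst a b c hab hf.ne_zero ?_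
      rw [← (swapEquiv F (σ ⊕ σ)).symm_apply_apply (linearSubst a b c f)]
      exact map_dvd _ hqf
    rw [AlgEquiv.symm_apply_eq] at hqh
    rw [hqh] at hdeg ⊢
    rw [← swapEquiv_coeffDerivation, EmbeddingLike.map_ne_zero_iff]
    exact hder h hhf hdeg

theorem natDegree_swapEquiv_linearSubst_le [Fintype σ] (f : MvPolynomial σ F[X]) :
    (swapEquiv F (σ ⊕ σ) (linearSubst a b c f)).natDegree ≤
      (Finset.univ.sup fun i => max (max (a i).natDegree (b i).natDegree) (c i).natDegree) *
        f.totalDegree + degT f := by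
  refine natDegree_swapEquiv_aeval_le (fun i => ?_) f
  refine le_trans ?_ (Finset.le_sup (Finset.mem_univ i))
  have hmap (r : F[X]) : (r.map (C (σ := σ ⊕ σ))).natDegree ≤ r.natDegree :=
    Polynomial.natDegree_map_le
  simp only [map_add, map_mul, swapEquiv_C, swapEquiv_X]
  refine Polynomial.natDegree_add_le_of_le (Polynomial.natDegree_add_le_of_le ?_ ?_) (hmap _)
  all_goals exact (Polynomial.natDegree_mul_C_le _ _).trans (hmap _)

theorem sepInT_linearSubst_of_natDegree_lt (hab : ∀ i, IsCoprime (a i) (b i))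
    (hf : Squarefree f)
    (hp : ringChar F = 0 ∨
      (swapEquiv F (σ ⊕ σ) (linearSubst a b c f)).natDegree < ringChar F) :
    sepInT (linearSubst a b c f) := by
  refine sepInT_linearSubst_of_derivative_ne_zero hab hf fun h hhf hdeg hder => ?_
  set q := swapEquiv F (σ ⊕ σ) (linearSubst a b c h) with hq
  have hdvd : ringChar F ∣ q.natDegree :=
    dvd_natDegree_of_derivative_eq_zero _ (by rw [hq, ← swapEquiv_coeffDerivation, hder, map_zero])
  have hle : q.natDegree ≤ (swapEquiv F (σ ⊕ σ) (linearSubst a b c f)).natDegree := by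
    refine Polynomial.natDegree_le_of_dvd (map_dvd _ (map_dvd _ hhf)) ?_
    rw [EmbeddingLike.map_ne_zero_iff]
    exact (squarefree_linearSubst a b c hab hf).ne_zero
  rcases hp with hp | hp
  · exact hdeg (zero_dvd_iff.1 (hp ▸ hdvd))
  · exact hdeg (Nat.eq_zero_of_dvd_of_lt hdvd (hle.trans_lt hp))

theorem sepInT_linearSubst_of_wronskian_ne_zero [Finite σ] {K : Type*} [Field K] [Algebra F K]
    [PerfectField K] (hab : ∀ i, IsCoprime (a i) (b i))
    (hf : Squarefree (map (Polynomial.mapRingHom (algebraMap F K)) f)) (hp : ringChar F ≠ 0)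
    (hW : ∀ i, Polynomial.wronskian (a i) (b i) ≠ 0) :
    sepInT (linearSubst a b c f) := by
  have : Fact (ringChar F).Prime := ⟨(CharP.char_is_prime_or_zero F _).resolve_right hp⟩
  refine sepInT_linearSubst_of_derivative_ne_zero hab (squarefree_of_squarefree_map _ hf)
    fun h hhf hdeg hder => hdeg ?_
  obtain ⟨ht, hx⟩ := derivs_eq_zero_of_coeffDerivation_linearSubst_eq_zero a b c
    (Polynomial.derivative' : Derivation F F[X] F[X]) hab
    (fun i => by simpa [Polynomial.wronskian, Polynomial.derivative'_apply] using hW i) hder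
  have hunit : IsUnit h := isUnit_of_dvd_of_derivs_eq_zero (ringChar F) hf hhf ht hx
  exact Polynomial.natDegree_eq_zero_of_isUnit ((hunit.map (linearSubst a b c)).map (swapEquiv F _))

end SepInT

theorem linear_subst_sepInT_multivariate_general {F K σ : Type*} [Field F] [Field K] [Algebra F K]
    [PerfectField K] [Fintype σ] (f : MvPolynomial σ F[X]) (a b c : σ → F[X])
    (hab : ∀ i, IsRelPrime (a i) (b i))
    (hcond :
      (Squarefree f ∧ (ringChar F = 0 ∨
        (Finset.univ.sup fun i => max (max (a i).natDegree (b i).natDegree) (c i).natDegree) *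
          f.totalDegree + degT f < ringChar F)) ∨
      (Squarefree (map (Polynomial.mapRingHom (algebraMap F K)) f) ∧
        ∀ i, notInFtp F (a i) (b i))) :
    sepInT
      (eval₂ C (fun i => C (a i) * X (.inl i) + C (b i) * X (.inr i) + C (c i)) f :
        MvPolynomial (σ ⊕ σ) F[X]) := by
  change sepInT (linearSubst a b c f)
  have hab i : IsCoprime (a i) (b i) := (hab i).isCoprime
  rcases hcond with ⟨hf, hp⟩ | ⟨hf, hnot⟩
  · exact sepInT_linearSubst_of_natDegree_lt hab hf
      (hp.imp_right (natDegree_swapEquiv_linearSubst_le f).trans_lt)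
  · by_cases hp : ringChar F = 0
    · exact sepInT_linearSubst_of_natDegree_lt hab (squarefree_of_squarefree_map _ hf) (.inl hp)
    · exact sepInT_linearSubst_of_wronskian_ne_zero hab hf hp
        fun i => wronskian_ne_zero_of_notInFtp hp (hab i) (hnot i)

end

/-- Let `F` be a field of characteristic `p` (possibly `0`), `d ≥ 1`, and
`f ∈ F[t][x₁,…,x_d]` square-free over the algebraic closure. Let `a_i, b_i, c_i ∈ F[t]` with
`gcd(a_i, b_i) = 1`, and let `Ψ : F[t][x₁,…,x_d] → F[t][x₁,…,x_{2d}]` be the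
`F[t]`-homomorphism `x_i ↦ a_i·x_i + b_i·x_{d+i} + c_i`. If `p = 0` or
`p > M·deg_{x⃗} f + deg_t f` (where `M` is the maximum of the degrees of all `a_i, b_i, c_i`),
or for every `i` we have `a_i ≠ 0` and `b_i/a_i ∉ F(t^p)`, then `Ψ(f)` is separable in `t`. -/
theorem linear_subst_sepInT_multivariate (F : Type*) [Field F] (d : ℕ) (hd : 1 ≤ d)
    (f : MvPolynomial (Fin d) (Polynomial F))
    (hf : Squarefree
      (MvPolynomial.map (Polynomial.mapRingHom (algebraMap F (AlgebraicClosure F))) f))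
    (a b c : Fin d → Polynomial F) (hab : ∀ i, IsRelPrime (a i) (b i))
    (hcond :
      (ringChar F = 0 ∨
        (Finset.univ.sup fun i =>
            max (max (a i).natDegree (b i).natDegree) (c i).natDegree) * f.totalDegree +
          degT f < ringChar F) ∨
      (∀ i, a i ≠ 0 ∧ notInFtp F (a i) (b i))) :
    sepInT
      (MvPolynomial.eval₂ MvPolynomial.C
        (fun i => MvPolynomial.C (a i) * MvPolynomial.X (Sum.inl i) +
          MvPolynomial.C (b i) * MvPolynomial.X (Sum.inr i) + MvPolynomial.C (c i)) f :
        MvPolynomial (Fin d ⊕ Fin d) (Polynomial F)) := by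
  exact linear_subst_sepInT_multivariate_general (K := AlgebraicClosure F) f a b c hab
    (hcond.imp (.intro (squarefree_of_squarefree_map _ hf)) fun h => ⟨hf, fun i => (h i).2⟩)
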